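/- Let L be a completely distributive commutative subspace lattice on H, let Φ be a rank preserving linear map on Alg L such that every element of F is consistent with respect to Φ, and let N ∈ F. Then there exist a linear map U defined on the (algebraic) linear span of ⋃{M : M ∈ 𝔊_N} — a dense subspace of ⋁{M : M ∈ 𝔊_N} — and a linear map V defined on the (algebraic) linear span of ⋃{M₋^⊥ : M ∈ 𝔊_N} — a dense subspace of ⋁{M₋^⊥ : M ∈ 𝔊_N} — such that Φ(x⊗f*) = (Ux)⊗(Vf)* whenever there is M ∈ 𝔊_N with x ∈ M and f ∈ M₋^⊥. -/

import Mathlib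

open scoped InnerProductSpace

noncomputable section

/-- The join (closed linear span) of a family of subspaces of a Hilbert space. -/
def closedJoin {H : Type*} [NormedAddCommGroup H] [InnerProductSpace ℂ H]
    (S : Set (Submodule ℂ H)) : Submodule ℂ H :=
  (sSup S).topologicalClosure

/-- A subspace lattice on `H`: a family of closed subspaces containing `{0}` and `H`,
closed under arbitrary intersections and arbitrary closed linear spans. -/
structure IsSubspaceLattice {H : Type*} [NormedAddCommGroup H] [InnerProductSpace ℂ H]
    (L : Set (Submodule ℂ H)) : Prop where
  isClosed : ∀ E ∈ L, IsClosed (E : Set H)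
  bot_mem : ⊥ ∈ L
  top_mem : ⊤ ∈ L
  sInf_mem : ∀ S : Set (Submodule ℂ H), S ⊆ L → sInf S ∈ L
  join_mem : ∀ S : Set (Submodule ℂ H), S ⊆ L → closedJoin S ∈ L

/-- `M₋`: the join of all members of `L` that do not contain `M`. -/
def minus {H : Type*} [NormedAddCommGroup H] [InnerProductSpace ℂ H]
    (L : Set (Submodule ℂ H)) (M : Submodule ℂ H) : Submodule ℂ H :=
  closedJoin {E | E ∈ L ∧ ¬ M ≤ E}

open Classical in
/-- The orthogonal projection of `H` onto a closed subspace `E`, as an operator on `H`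
(junk value `0` if `E` is not closed). -/
def projOf {H : Type*} [NormedAddCommGroup H] [InnerProductSpace ℂ H] [CompleteSpace H]
    (E : Submodule ℂ H) : H →L[ℂ] H :=
  if h : IsClosed (E : Set H) then
    haveI : CompleteSpace E := h.completeSpace_coe
    E.subtypeL.comp (Submodule.orthogonalProjectionOnto E)
  else 0

/-- A commutative subspace lattice: the orthogonal projections onto members commute. -/
structure IsCSL {H : Type*} [NormedAddCommGroup H] [InnerProductSpace ℂ H] [CompleteSpace H]
    (L : Set (Submodule ℂ H)) extends IsSubspaceLattice L : Prop where
  commutes : ∀ E ∈ L, ∀ F ∈ L, projOf E * projOf F = projOf F * projOf E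

/-- Complete distributivity of the lattice `L` (meets are intersections, joins are
closed linear spans). -/
def IsCompletelyDistributive {H : Type*} [NormedAddCommGroup H] [InnerProductSpace ℂ H]
    (L : Set (Submodule ℂ H)) : Prop :=
  ∀ (I : Type) (J : I → Type) (E : (i : I) → J i → Submodule ℂ H),
    (∀ i j, E i j ∈ L) →
     ((⨅ i, closedJoin (Set.range (E i)))
        = closedJoin (Set.range fun φ : (∀ i, J i) => ⨅ i, E i (φ i)))
    ∧ (closedJoin (Set.range fun i => ⨅ j, E i j)
        = ⨅ φ : (∀ i, J i), closedJoin (Set.range fun i => E i (φ i)))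

/-- `Alg L`: all bounded operators leaving every member of `L` invariant. -/
def algL {H : Type*} [NormedAddCommGroup H] [InnerProductSpace ℂ H]
    (L : Set (Submodule ℂ H)) : Set (H →L[ℂ] H) :=
  {T | ∀ E ∈ L, ∀ x ∈ E, T x ∈ E}

/-- The rank one operator `x ⊗ f* : h ↦ ⟨h, f⟩ x`. -/
def rankOne {H : Type*} [NormedAddCommGroup H] [InnerProductSpace ℂ H]
    (x f : H) : H →L[ℂ] H :=
  (innerSL ℂ f).smulRight x

/-- The rank of a bounded operator: the dimension of its range. -/
def opRank {H : Type*} [NormedAddCommGroup H] [InnerProductSpace ℂ H]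
    (T : H →L[ℂ] H) : Cardinal :=
  Module.rank ℂ (LinearMap.range (T : H →ₗ[ℂ] H))

/-- `Φ` is a linear map of `Alg L` into itself. -/
structure IsLinearOnAlg {H : Type*} [NormedAddCommGroup H] [InnerProductSpace ℂ H]
    (L : Set (Submodule ℂ H)) (Φ : (H →L[ℂ] H) → (H →L[ℂ] H)) : Prop where
  maps : ∀ A ∈ algL L, Φ A ∈ algL L
  map_add : ∀ A ∈ algL L, ∀ B ∈ algL L, Φ (A + B) = Φ A + Φ B
  map_smul : ∀ (c : ℂ), ∀ A ∈ algL L, Φ (c • A) = c • Φ A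

/-- `Φ` preserves the rank of every finite rank operator in `Alg L`. -/
def RankPreserving {H : Type*} [NormedAddCommGroup H] [InnerProductSpace ℂ H]
    (L : Set (Submodule ℂ H)) (Φ : (H →L[ℂ] H) → (H →L[ℂ] H)) : Prop :=
  ∀ A ∈ algL L, opRank A < Cardinal.aleph0 → opRank (Φ A) = opRank A

/-- `a ∼ b`: (nonzero) vectors `a` and `b` are linearly dependent. -/
def Dep {H : Type*} [NormedAddCommGroup H] [InnerProductSpace ℂ H] (a b : H) : Prop :=
  ∃ c : ℂ, c ≠ 0 ∧ b = c • a

/-- `N` is consistent with respect to `Φ`. -/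
def Consistent {H : Type*} [NormedAddCommGroup H] [InnerProductSpace ℂ H]
    (L : Set (Submodule ℂ H)) (Φ : (H →L[ℂ] H) → (H →L[ℂ] H))
    (N : Submodule ℂ H) : Prop :=
  N ≠ ⊥ ∧ minus L N ≠ ⊤ ∧
    ∃ (U : N →ₗ[ℂ] H) (V : ((minus L N)ᗮ : Submodule ℂ H) →ₗ[ℂ] H),
      ∀ (x : N) (f : ((minus L N)ᗮ : Submodule ℂ H)),
        Φ (rankOne (x : H) (f : H)) = rankOne (U x) (V f)

/-- `N` is twisted with respect to `Φ`. -/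
def Twisted {H : Type*} [NormedAddCommGroup H] [InnerProductSpace ℂ H]
    (L : Set (Submodule ℂ H)) (Φ : (H →L[ℂ] H) → (H →L[ℂ] H))
    (N : Submodule ℂ H) : Prop :=
  N ≠ ⊥ ∧ minus L N ≠ ⊤ ∧
    ∃ (U : ((minus L N)ᗮ : Submodule ℂ H) →ₗ⋆[ℂ] H) (V : N →ₗ⋆[ℂ] H),
      ∀ (x : N) (f : ((minus L N)ᗮ : Submodule ℂ H)),
        Φ (rankOne (x : H) (f : H)) = rankOne (U f) (V x)

/-- `N` is isolated: `dim N = 1` and `N^⊥ ∈ L`. -/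
def Isolated {H : Type*} [NormedAddCommGroup H] [InnerProductSpace ℂ H]
    (L : Set (Submodule ℂ H)) (N : Submodule ℂ H) : Prop :=
  Module.rank ℂ N = 1 ∧ Nᗮ ∈ L

/-- The family `F` of all `N ∈ L` with `N ≠ {0}` and `N₋ ≠ H`. -/
def famF {H : Type*} [NormedAddCommGroup H] [InnerProductSpace ℂ H]
    (L : Set (Submodule ℂ H)) : Set (Submodule ℂ H) :=
  {N | N ∈ L ∧ N ≠ ⊥ ∧ minus L N ≠ ⊤}

/-- Subspaces are comparable if one contains the other. -/
def Comparable' {H : Type*} [NormedAddCommGroup H] [InnerProductSpace ℂ H]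
    (M N : Submodule ℂ H) : Prop :=
  M ≤ N ∨ N ≤ M

/-- There is a chain in `F` from `M` to `N`. -/
def ChainConn {H : Type*} [NormedAddCommGroup H] [InnerProductSpace ℂ H]
    (L : Set (Submodule ℂ H)) (M N : Submodule ℂ H) : Prop :=
  ∃ (n : ℕ) (c : Fin (n + 1) → Submodule ℂ H),
    (∀ k, c k ∈ famF L) ∧ c 0 = M ∧ c (Fin.last n) = N ∧
      ∀ k : Fin n, Comparable' (c k.castSucc) (c k.succ)

/-- `𝔊_N`: all members of `F` that can be connected to `N` by a chain. -/
def GSet {H : Type*} [NormedAddCommGroup H] [InnerProductSpace ℂ H]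
    (L : Set (Submodule ℂ H)) (N : Submodule ℂ H) : Set (Submodule ℂ H) :=
  {M | M ∈ famF L ∧ ChainConn L N M}

end


/-- Zigzag paths in a preorder, with length and the transport value of a cocycle. -/
inductive Pth {α : Type*} [Preorder α] (a : α → α → ℂˣ) : α → α → ℕ → ℂˣ → Prop
  | nil (X : α) : Pth a X X 0 1
  | cons {X D Y Z : α} {n : ℕ} {c : ℂˣ} (h1 : X ≤ D) (h2 : Y ≤ D) (h : Pth a Y Z n c) :
      Pth a X Z (n + 1) (a X D * (a Y D)⁻¹ * c)

namespace Pth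

variable {α : Type*} [Preorder α] {a : α → α → ℂˣ}

theorem cast {X Y : α} {n m : ℕ} {c d : ℂˣ} (h : Pth a X Y n c) (hn : n = m) (hc : c = d) :
    Pth a X Y m d := by subst hn; subst hc; exact h

theorem trans {X Y Z : α} {n m : ℕ} {c d : ℂˣ} (h : Pth a X Y n c) (h' : Pth a Y Z m d) :
    Pth a X Z (n + m) (c * d) := by
  induction h with
  | nil X => exact h'.cast (by omega) (by simp)
  | cons h1 h2 h ih => exact (Pth.cons h1 h2 (ih h')).cast (by omega) (by simp [mul_assoc])

theorem one {X D Y : α} (h1 : X ≤ D) (h2 : Y ≤ D) : Pth a X Y 1 (a X D * (a Y D)⁻¹) :=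
  (Pth.cons h1 h2 (Pth.nil Y)).cast rfl (by simp)

theorem symm {X Y : α} {n : ℕ} {c : ℂˣ} (h : Pth a X Y n c) : Pth a Y X n c⁻¹ := by
  induction h with
  | nil X => exact (Pth.nil X).cast rfl (by simp)
  | cons h1 h2 h ih =>
    refine (ih.trans (Pth.one h2 h1)).cast rfl ?_
    simp only [mul_inv_rev, inv_inv]

theorem shrinkStart (hmul : ∀ X Y Z, X ≤ Y → Y ≤ Z → a X Z = a X Y * a Y Z)
    {X Y C : α} {n : ℕ} {c : ℂˣ} (h : Pth a X Y n c) (hn : 0 < n) (hC : C ≤ X) :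
    Pth a C Y n (a C X * c) := by
  cases h with
  | nil => omega
  | @cons _ D Y' _ n c h1 h2 h =>
    refine (Pth.cons (hC.trans h1) h2 h).cast rfl ?_
    rw [hmul C X D hC h1]; simp only [mul_assoc]

theorem shrinkEnd (hmul : ∀ X Y Z, X ≤ Y → Y ≤ Z → a X Z = a X Y * a Y Z)
    {X Y C : α} {n : ℕ} {c : ℂˣ} (h : Pth a X Y n c) (hn : 0 < n) (hC : C ≤ Y) :
    Pth a X C n (c * (a C Y)⁻¹) := by
  refine (h.symm.shrinkStart hmul hn hC).symm.cast rfl ?_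
  simp

theorem toFun {X Y : α} {n : ℕ} {c : ℂˣ} (h : Pth a X Y n c) :
    ∃ A B : ℕ → α, A 0 = X ∧ A n = Y ∧ (∀ i < n, A i ≤ B i ∧ A (i + 1) ≤ B i) ∧
      c = ∏ i ∈ Finset.range n, (a (A i) (B i) * (a (A (i + 1)) (B i))⁻¹) := by
  induction h with
  | nil X => exact ⟨fun _ => X, fun _ => X, rfl, rfl, by simp, by simp⟩
  | @cons X D Y Z n c h1 h2 h ih =>
    obtain ⟨A, B, hA0, hAn, hAB, hc⟩ := ih
    refine ⟨fun i => Nat.casesOn i X A, fun i => Nat.casesOn i D B, rfl, hAn, ?_, ?_⟩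
    · intro i hi
      cases i with
      | zero => exact ⟨h1, by simpa [hA0] using h2⟩
      | succ i => exact hAB i (by omega)
    · rw [Finset.prod_range_succ', hc, mul_comm]
      simp [hA0]

theorem seg {A B : ℕ → α} {n : ℕ} (h : ∀ i < n, A i ≤ B i ∧ A (i + 1) ≤ B i) (k : ℕ) :
    ∀ i, i + k ≤ n → Pth a (A i) (A (i + k)) k
      (∏ j ∈ Finset.range k, (a (A (i + j)) (B (i + j)) * (a (A (i + j + 1)) (B (i + j)))⁻¹)) := by
  induction k with
  | zero => intro i _; exact (Pth.nil _).cast rfl (by simp)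
  | succ k ih =>
    intro i hi
    refine ((ih i (by omega)).trans (Pth.one (h (i + k) (by omega)).1 (h (i + k) (by omega)).2)).cast
      rfl ?_
    rw [Finset.prod_range_succ]

theorem closed (hmul : ∀ X Y Z, X ≤ Y → Y ≤ Z → a X Z = a X Y * a Y Z)
    (hdet : ∀ (n : ℕ) (A B : ℕ → α), (∀ i < n, A i ≤ B i ∧ A (i + 1) ≤ B i) → A n = A 0 →
      (∀ i j, i < j → j < n → ¬ ∃ C, C ≤ A i ∧ C ≤ A j) →
      (∀ i j, i < j → j < n → ¬ ∃ D, B i ≤ D ∧ B j ≤ D) →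
      ∏ i ∈ Finset.range n, (a (A i) (B i) * (a (A (i + 1)) (B i))⁻¹) = 1) (n : ℕ) :
    ∀ (X : α) (c : ℂˣ), Pth a X X n c → c = 1 := by
  induction n using Nat.strong_induction_on with
  | _ n IH =>
  intro X c h
  obtain ⟨A, B, hA0, hAn, hAB, hc⟩ := h.toFun
  have hcl : A n = A 0 := by rw [hA0, hAn]
  set w : ℕ → ℂˣ := fun i => a (A i) (B i) * (a (A (i + 1)) (B i))⁻¹ with hw
  have hseg : ∀ i k, i + k ≤ n → Pth a (A i) (A (i + k)) k (∏ j ∈ Finset.range k, w (i + j)) :=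
    fun i k hk => seg hAB k i hk
  by_cases hl : ∀ i j, i < j → j < n → ¬ ∃ C, C ≤ A i ∧ C ≤ A j
  swap
  · push Not at hl
    obtain ⟨i, j, hij, hjn, C, hCi, hCj⟩ := hl
    obtain ⟨k, rfl⟩ := Nat.exists_eq_add_of_lt hij
    obtain ⟨l, rfl⟩ := Nat.exists_eq_add_of_lt hjn
    have p0 := hseg 0 i (by omega)
    have p1 := hseg i (k + 1) (by omega)
    have p2 := hseg (i + k + 1) (l + 1) (by omega)
    rw [show i + k + 1 + (l + 1) = i + k + 1 + l + 1 by omega, hcl] at p2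
    rw [Nat.zero_add] at p0
    have e1 := IH _ (by omega) _ _ ((p1.shrinkStart hmul (by omega) hCi).shrinkEnd hmul (by omega) hCj)
    have e2 := IH _ (by omega) _ _
      (((p2.trans p0).shrinkStart hmul (by omega) hCj).shrinkEnd hmul (by omega) hCi)
    rw [hc]
    have : i + k + 1 + l + 1 = i + ((k + 1) + (l + 1)) := by omega
    rw [this, Finset.prod_range_add, Finset.prod_range_add]
    have := congrArg₂ (· * ·) e1 e2
    simp only [zero_add, mul_one] at this
    rw [← this]
    simp only [← add_assoc]
    generalize a C (A i) = u
    have e : ∀ p q r u v : ℂˣ, p * (q * r) = u * q * v⁻¹ * (v * (r * p) * u⁻¹) := by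
      intro p q r u v
      rw [show u * q * v⁻¹ * (v * (r * p) * u⁻¹) = (u * u⁻¹) * (v * v⁻¹) * (p * (q * r)) by
        ac_rfl]
      simp
    exact e _ _ _ _ _
  by_cases hu : ∀ i j, i < j → j < n → ¬ ∃ D, B i ≤ D ∧ B j ≤ D
  swap
  · push Not at hu
    obtain ⟨i, j, hij, hjn, D, hDi, hDj⟩ := hu
    obtain ⟨k, rfl⟩ := Nat.exists_eq_add_of_lt hij
    obtain ⟨l, rfl⟩ := Nat.exists_eq_add_of_lt hjn
    have p0 := hseg 0 i (by omega)
    have p1 := hseg (i + 1) k (by omega)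
    have p2 := hseg (i + k + 1 + 1) l (by omega)
    rw [show i + k + 1 + 1 + l = i + k + 1 + l + 1 by omega, hcl] at p2
    rw [Nat.zero_add] at p0
    rw [show i + 1 + k = i + k + 1 by omega] at p1
    obtain ⟨hi1, hi2⟩ := hAB i (by omega)
    obtain ⟨hj1, hj2⟩ := hAB (i + k + 1) (by omega)
    have e1 := IH _ (by omega) _ _ (p1.trans (Pth.one (hj1.trans hDj) (hi2.trans hDi)))
    have e2 := IH _ (by omega) _ _
      ((p2.trans p0).trans (Pth.one (hi1.trans hDi) (hj2.trans hDj)))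
    rw [hc]
    have : i + k + 1 + l + 1 = i + (1 + (k + (1 + l))) := by omega
    rw [this]
    simp only [Finset.prod_range_add, Finset.prod_range_one]
    have := congrArg₂ (· * ·) e1 e2
    simp only [zero_add, mul_one] at this
    rw [← this]
    rw [hmul _ _ _ hi1 hDi, hmul _ _ _ hi2 hDi, hmul _ _ _ hj1 hDj, hmul _ _ _ hj2 hDj]
    have hwi : w i = a (A i) (B i) * (a (A (i + 1)) (B i))⁻¹ := rfl
    have hwj : w (i + k + 1) = a (A (i + k + 1)) (B (i + k + 1)) *
      (a (A (i + k + 1 + 1)) (B (i + k + 1)))⁻¹ := rfl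
    simp only [← add_assoc, add_zero]
    rw [show i + 1 + k = i + k + 1 by omega, hwi, hwj]
    have e : ∀ p q r s t s' t' u v : ℂˣ, p * (s * t⁻¹ * (q * (s' * t'⁻¹ * r))) =
        q * (s' * v * (t * u)⁻¹) * (r * p * (s * u * (t' * v)⁻¹)) := by
      intro p q r s t s' t' u v
      rw [mul_inv, mul_inv, show q * (s' * v * (t⁻¹ * u⁻¹)) * (r * p * (s * u * (t'⁻¹ * v⁻¹)))
        = (u * u⁻¹) * (v * v⁻¹) * (p * (s * t⁻¹ * (q * (s' * t'⁻¹ * r)))) by ac_rfl]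
      simp
    exact e _ _ _ _ _ _ _ _ _
  rw [hc]
  exact hdet n A B hAB hcl hl hu

theorem potential (hmul : ∀ X Y Z, X ≤ Y → Y ≤ Z → a X Z = a X Y * a Y Z)
    (hcl : ∀ (n : ℕ) (X : α) (c : ℂˣ), Pth a X X n c → c = 1) :
    ∃ c : α → ℂˣ, ∀ X Y, X ≤ Y → c X * a X Y = c Y := by
  have hone : ∀ X, a X X = 1 := by
    intro X
    have := hmul X X X le_rfl le_rfl
    simpa using this
  let S : Setoid α :=
    { r := fun X Y => ∃ n c, Pth a X Y n c
      iseqv := ⟨fun X => ⟨_, _, Pth.nil X⟩, fun ⟨n, c, h⟩ => ⟨_, _, h.symm⟩,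
        fun ⟨n, c, h⟩ ⟨n', c', h'⟩ => ⟨_, _, h.trans h'⟩⟩ }
  have hrep : ∀ X : α, ∃ c n, Pth a (Quotient.mk S X).out X n c := by
    intro X
    obtain ⟨n, c, h⟩ : S.r (Quotient.mk S X).out X := Quotient.mk_out (s := S) X
    exact ⟨c, n, h⟩
  choose c n hc using hrep
  refine ⟨c, fun X Y hXY => ?_⟩
  have hq : Quotient.mk S X = Quotient.mk S Y :=
    Quotient.sound (s := S) ⟨_, _, Pth.one hXY le_rfl⟩
  have h1 := (hc X).trans (Pth.one hXY (le_refl Y))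
  have h2 := (hc Y).symm
  rw [← hq] at h2
  have := hcl _ _ _ (h1.trans h2)
  rw [hone, inv_one, mul_one] at this
  exact mul_inv_eq_one.mp this

end Pth

section GlueSec

variable {H : Type*} [NormedAddCommGroup H] [InnerProductSpace ℂ H]

theorem glue_finite {ι κ : Type*} (S : ι → Submodule ℂ H) (u : ι → H →ₗ[ℂ] H)
    (p : ι → H →ₗ[ℂ] H) (hp1 : ∀ i x, p i x ∈ S i) (hp2 : ∀ i, ∀ x ∈ S i, p i x = x)
    (hp3 : ∀ i j, ∀ x ∈ S j, p i x ∈ S j)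
    (hu : ∀ i j x, x ∈ S i → x ∈ S j → u i x = u j x)
    (idx : κ → ι) (s : Finset κ) :
    ∀ x : κ → H, (∀ k, x k ∈ S (idx k)) → ∑ k ∈ s, x k = 0 → ∑ k ∈ s, u (idx k) (x k) = 0 := by
  classical
  induction s using Finset.induction_on with
  | empty => intro x _ _; simp
  | insert b s hb ih =>
    intro x hx h0
    rw [Finset.sum_insert hb] at h0 ⊢
    have hxb : x b = - ∑ k ∈ s, x k := eq_neg_of_add_eq_zero_left h0
    have hpb : x b = - ∑ k ∈ s, p (idx b) (x k) := by
      rw [← map_sum, ← map_neg, ← hxb, hp2 _ _ (hx b)]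
    have h1 : ∑ k ∈ s, (x k - p (idx b) (x k)) = 0 := by
      rw [Finset.sum_sub_distrib, sub_eq_zero]
      exact neg_injective (hxb.symm.trans hpb)
    have h2 := ih (fun k => x k - p (idx b) (x k))
      (fun k => Submodule.sub_mem _ (hx k) (hp3 _ _ _ (hx k))) h1
    simp only [map_sub, Finset.sum_sub_distrib] at h2
    have h3 : u (idx b) (x b) = - ∑ k ∈ s, u (idx k) (p (idx b) (x k)) := by
      conv_lhs => rw [hpb]
      rw [map_neg, map_sum]
      congr 1
      exact Finset.sum_congr rfl fun k _ => hu _ _ _ (hp1 _ _) (hp3 _ _ _ (hx k))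
    rw [h3, neg_add_eq_sub, h2]

theorem glue {ι : Type*} (S : ι → Submodule ℂ H) (u : ι → H →ₗ[ℂ] H)
    (p : ι → H →ₗ[ℂ] H) (hp1 : ∀ i x, p i x ∈ S i) (hp2 : ∀ i, ∀ x ∈ S i, p i x = x)
    (hp3 : ∀ i j, ∀ x ∈ S j, p i x ∈ S j)
    (hu : ∀ i j x, x ∈ S i → x ∈ S j → u i x = u j x) :
    ∃ U : H →ₗ[ℂ] H, ∀ i, ∀ x ∈ S i, U x = u i x := by
  let f : ((Σ i, S i) →₀ ℂ) →ₗ[ℂ] H := Finsupp.linearCombination ℂ fun q => (q.2 : H)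
  let g : ((Σ i, S i) →₀ ℂ) →ₗ[ℂ] H := Finsupp.linearCombination ℂ fun q => u q.1 (q.2 : H)
  have hker : ∀ l, f l = 0 → g l = 0 := by
    intro l hl
    simp only [f, g, Finsupp.linearCombination_apply, Finsupp.sum] at hl ⊢
    have := glue_finite S u p hp1 hp2 hp3 hu (fun q : (Σ i, S i) => q.1) l.support
      (fun q => l q • (q.2 : H)) (fun q => Submodule.smul_mem _ _ q.2.2) hl
    simpa using this
  obtain ⟨r, hr⟩ := f.rangeRestrict.exists_rightInverse_of_surjective f.range_rangeRestrict
  obtain ⟨U, hU⟩ := (g ∘ₗ r).exists_extend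
  have key : ∀ l, U (f l) = g l := by
    intro l
    have h1 : U (f l) = g (r (f.rangeRestrict l)) := LinearMap.congr_fun hU (f.rangeRestrict l)
    have h2 : f (r (f.rangeRestrict l)) = f l :=
      congrArg Subtype.val (LinearMap.congr_fun hr (f.rangeRestrict l))
    rw [h1, ← sub_eq_zero, ← map_sub]
    exact hker _ (by rw [map_sub, h2, sub_self])
  refine ⟨U, fun i x hx => ?_⟩
  simpa [f, g] using key (Finsupp.single ⟨i, ⟨x, hx⟩⟩ 1)

end GlueSec

section ProjSec

variable {H : Type*} [NormedAddCommGroup H] [InnerProductSpace ℂ H] [CompleteSpace H]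

theorem projOf_mem {E : Submodule ℂ H} (x : H) : projOf E x ∈ E := by
  unfold projOf
  split_ifs with h
  · simp
  · simp

theorem projOf_self {E : Submodule ℂ H} (h : IsClosed (E : Set H)) {x : H} (hx : x ∈ E) :
    projOf E x = x := by
  have : CompleteSpace E := h.completeSpace_coe
  unfold projOf
  rw [dif_pos h]
  have := Submodule.starProjection_eq_self_iff.mpr hx
  exact this

theorem sub_projOf_mem {E : Submodule ℂ H} (h : IsClosed (E : Set H)) (x : H) :
    x - projOf E x ∈ Eᗮ := by
  have : CompleteSpace E := h.completeSpace_coe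
  unfold projOf
  rw [dif_pos h]
  exact Submodule.sub_starProjection_mem_orthogonal (K := E) x

theorem projOf_eq_zero {E : Submodule ℂ H} (h : IsClosed (E : Set H)) {x : H} (hx : x ∈ Eᗮ) :
    projOf E x = 0 := by
  have h1 : projOf E x ∈ Eᗮ := by
    have := Submodule.sub_mem _ hx (sub_projOf_mem h x)
    simpa using this
  have := Submodule.inner_right_of_mem_orthogonal (projOf_mem (E := E) x) h1
  exact inner_self_eq_zero.mp this

theorem mem_orth_of_projOf {E : Submodule ℂ H} (h : IsClosed (E : Set H)) {x : H}
    (hx : projOf E x = 0) : x ∈ Eᗮ := by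
  simpa [hx] using sub_projOf_mem h x

variable {L : Set (Submodule ℂ H)}

theorem proj_comm (hL : IsCSL L) {E F : Submodule ℂ H} (hE : E ∈ L) (hF : F ∈ L) (x : H) :
    projOf E (projOf F x) = projOf F (projOf E x) :=
  congrArg (fun T : H →L[ℂ] H => T x) (hL.commutes E hE F hF)

theorem minus_mem (hL : IsCSL L) (M : Submodule ℂ H) : minus L M ∈ L :=
  hL.join_mem _ fun _ h => h.1

theorem inf_mem (hL : IsCSL L) {E F : Submodule ℂ H} (hE : E ∈ L) (hF : F ∈ L) : E ⊓ F ∈ L := by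
  have := hL.sInf_mem {E, F} (by rintro x (rfl | rfl) <;> assumption)
  simpa using this

theorem le_minus {E M : Submodule ℂ H} (hE : E ∈ L) (h : ¬ M ≤ E) : E ≤ minus L M :=
  (le_sSup (show E ∈ {E | E ∈ L ∧ ¬ M ≤ E} from ⟨hE, h⟩)).trans (Submodule.le_topologicalClosure _)

theorem mem_minus_orth {M : Submodule ℂ H} {z : H} :
    z ∈ (minus L M)ᗮ ↔ ∀ E ∈ L, ¬ M ≤ E → z ∈ Eᗮ := by
  constructor
  · intro h E hE hM
    exact Submodule.orthogonal_le (le_minus hE hM) h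
  · intro h
    unfold minus closedJoin
    rw [Submodule.orthogonal_closure, ← Submodule.sInf_orthogonal]
    simp only [Submodule.mem_iInf]
    exact fun E hE => h E hE.1 hE.2

theorem minus_orth_anti {M M' : Submodule ℂ H} (h : M ≤ M') :
    (minus L M')ᗮ ≤ (minus L M)ᗮ := by
  intro z hz
  rw [mem_minus_orth] at hz ⊢
  exact fun E hE hM => hz E hE fun h' => hM (h.trans h')

theorem famF_of_le (hL : IsCSL L) {M M' : Submodule ℂ H} (hM : M ∈ L) (h0 : M ≠ ⊥) (h : M ≤ M')
    (hM' : M' ∈ famF L) : M ∈ famF L := by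
  refine ⟨hM, h0, fun ht => hM'.2.2 ?_⟩
  have h1 := minus_orth_anti (L := L) h
  rw [ht, Submodule.top_orthogonal_eq_bot, le_bot_iff] at h1
  have : CompleteSpace (minus L M') := (hL.isClosed _ (minus_mem hL M')).completeSpace_coe
  exact Submodule.orthogonal_eq_bot_iff.mp h1

/-- common upper bound in `famF`. -/
theorem famF_upper (hL : IsCSL L) {M M' : Submodule ℂ H} (hM : M ∈ famF L) (hM' : M' ∈ famF L)
    {z : H} (hz0 : z ≠ 0) (hz : z ∈ (minus L M)ᗮ) (hz' : z ∈ (minus L M')ᗮ) :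
    ∃ D ∈ famF L, M ≤ D ∧ M' ≤ D ∧ z ∈ (minus L D)ᗮ := by
  have hMD : M ≤ closedJoin {M, M'} :=
    (le_sSup (by simp)).trans (Submodule.le_topologicalClosure _)
  have hMD' : M' ≤ closedJoin {M, M'} :=
    (le_sSup (by simp)).trans (Submodule.le_topologicalClosure _)
  have hzD : z ∈ (minus L (closedJoin {M, M'}))ᗮ := by
    rw [mem_minus_orth] at hz hz' ⊢
    intro E hE hD
    by_cases h1 : M ≤ E
    · by_cases h2 : M' ≤ E
      · refine absurd ?_ hD
        refine Submodule.topologicalClosure_minimal _ ?_ (hL.isClosed E hE)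
        refine sSup_le ?_
        rintro x (rfl | rfl) <;> assumption
      · exact hz' E hE h2
    · exact hz E hE h1
  refine ⟨closedJoin {M, M'}, ⟨hL.join_mem _ ?_, ?_, ?_⟩, hMD, hMD', hzD⟩
  · rintro x (rfl | rfl)
    exacts [hM.1, hM'.1]
  · intro h
    rw [h, le_bot_iff] at hMD
    exact hM.2.1 hMD
  · intro h
    rw [h, Submodule.top_orthogonal_eq_bot] at hzD
    exact hz0 (by simpa using hzD)

theorem orth_of_inf (hL : IsCSL L) {E F : Submodule ℂ H} (hE : E ∈ L) (hF : F ∈ L)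
    (h : E ⊓ F = ⊥) {x y : H} (hx : x ∈ E) (hy : y ∈ F) : ⟪x, y⟫_ℂ = 0 := by
  have h1 : projOf E y ∈ E ⊓ F := by
    refine ⟨projOf_mem _, ?_⟩
    conv => rw [← projOf_self (hL.isClosed F hF) hy]
    rw [proj_comm hL hE hF]
    exact projOf_mem _
  rw [h, Submodule.mem_bot] at h1
  exact Submodule.inner_right_of_mem_orthogonal hx (mem_orth_of_projOf (hL.isClosed E hE) h1)

theorem sub_proj_orth (hL : IsCSL L) {E F : Submodule ℂ H} (hE : E ∈ L) (hF : F ∈ L)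
    {x : H} (hx : x ∈ Eᗮ) : x - projOf F x ∈ Eᗮ := by
  apply mem_orth_of_projOf (hL.isClosed E hE)
  rw [map_sub, proj_comm hL hE hF, projOf_eq_zero (hL.isClosed E hE) hx]
  simp

theorem orth_of_orth_inf (hL : IsCSL L) {E F : Submodule ℂ H} (hE : E ∈ L) (hF : F ∈ L)
    (h : ∀ z, z ∈ Eᗮ → z ∈ Fᗮ → z = 0) {x y : H} (hx : x ∈ Eᗮ) (hy : y ∈ Fᗮ) :
    ⟪x, y⟫_ℂ = 0 := by
  have h1 := h (x - projOf F x) (sub_proj_orth hL hE hF hx) (sub_projOf_mem (hL.isClosed F hF) x)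
  rw [sub_eq_zero] at h1
  rw [h1]
  exact Submodule.inner_right_of_mem_orthogonal (projOf_mem _) hy

end ProjSec

section RankSec

variable {H : Type*} [NormedAddCommGroup H] [InnerProductSpace ℂ H]

@[simp] theorem rankOne_apply (x f h : H) : rankOne x f h = ⟪f, h⟫_ℂ • x := by
  simp [rankOne]

theorem rankOne_smul_left (c : ℂ) (x f : H) : rankOne (c • x) f = c • rankOne x f := by
  ext h; simp [smul_smul, mul_comm]

theorem rankOne_smul_right (c : ℂ) (x f : H) :
    rankOne x (c • f) = (starRingEnd ℂ c) • rankOne x f := by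
  ext h; simp [smul_smul, mul_comm]

theorem rankOne_sub_left (x y f : H) : rankOne (x - y) f = rankOne x f - rankOne y f := by
  ext h; simp [smul_sub]

theorem rankOne_add_left (x y f : H) : rankOne (x + y) f = rankOne x f + rankOne y f := by
  ext h; simp [smul_add]

/-- evaluation against a finite family -/
noncomputable def evalG {n : ℕ} (g : Fin n → H) : H →ₗ[ℂ] (Fin n → ℂ) :=
  LinearMap.pi fun i => (innerSL ℂ (g i) : H →ₗ[ℂ] ℂ)

theorem evalG_apply {n : ℕ} (g : Fin n → H) (h : H) (i : Fin n) :
    evalG g h i = ⟪g i, h⟫_ℂ := by simp [evalG]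

theorem sum_rankOne_coe {n : ℕ} (z g : Fin n → H) :
    ((∑ i, rankOne (z i) (g i) : H →L[ℂ] H) : H →ₗ[ℂ] H) =
      (Fintype.linearCombination ℂ z) ∘ₗ evalG g := by
  ext h
  simp [Fintype.linearCombination_apply, evalG_apply]

theorem opRank_sum_lt {n : ℕ} (z g : Fin n → H) :
    opRank (∑ i, rankOne (z i) (g i)) < Cardinal.aleph0 := by
  unfold opRank
  rw [sum_rankOne_coe, LinearMap.range_comp]
  exact Module.rank_lt_aleph0 _ _

theorem opRank_sum_iff {n : ℕ} (z g : Fin n → H) :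
    opRank (∑ i, rankOne (z i) (g i)) = n ↔
      LinearIndependent ℂ z ∧ Function.Surjective (evalG g) := by
  have hfin : opRank (∑ i, rankOne (z i) (g i)) = n ↔
      Module.finrank ℂ (Submodule.map (Fintype.linearCombination ℂ z) (LinearMap.range (evalG g)))
        = n := by
    unfold opRank
    rw [sum_rankOne_coe, LinearMap.range_comp, ← Module.finrank_eq_rank]
    exact Nat.cast_inj
  rw [hfin]
  constructor
  · intro h
    have h1 : Module.finrank ℂ (LinearMap.range (evalG g)) = n := by
      refine le_antisymm ?_ ?_
      · simpa using Submodule.finrank_le (LinearMap.range (evalG g))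
      · exact h.symm.le.trans (Submodule.finrank_map_le _ _)
    have h2 : LinearMap.range (evalG g) = ⊤ := by
      apply Submodule.eq_top_of_finrank_eq
      simpa using h1
    refine ⟨?_, LinearMap.range_eq_top.mp h2⟩
    rw [h2, Submodule.map_top, Fintype.range_linearCombination] at h
    rw [linearIndependent_iff_card_eq_finrank_span]
    simpa [Set.finrank] using h.symm
  · rintro ⟨h1, h2⟩
    rw [LinearMap.range_eq_top.mpr h2, Submodule.map_top, Fintype.range_linearCombination]
    simpa using finrank_span_eq_card h1

theorem evalG_surj {n : ℕ} (g : Fin n → H) (h0 : ∀ i, g i ≠ 0)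
    (ho : ∀ i j, i ≠ j → ⟪g i, g j⟫_ℂ = 0) : Function.Surjective (evalG g) := by
  intro v
  refine ⟨∑ j, (v j / ⟪g j, g j⟫_ℂ) • g j, ?_⟩
  funext i
  rw [evalG_apply, inner_sum, Finset.sum_eq_single i]
  · rw [inner_smul_right]
    exact div_mul_cancel₀ _ (inner_self_ne_zero.mpr (h0 i))
  · intro j _ hj
    rw [inner_smul_right, ho i j hj.symm, mul_zero]
  · simp

theorem cyc_prod (m : ℕ) (y : ℕ → H) (α β : ℕ → ℂ) (hα : ∀ i, α i ≠ 0)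
    (hy : y (m + 1) = y 0) (hli : LinearIndependent ℂ (fun i : Fin (m + 1) => y i))
    (hdep : ¬ LinearIndependent ℂ (fun i : Fin (m + 1) => α i • y i - β i • y (i + 1))) :
    ∏ i ∈ Finset.range (m + 1), α i = ∏ i ∈ Finset.range (m + 1), β i := by
  rw [Fintype.not_linearIndependent_iff] at hdep
  obtain ⟨c', hc', k, hk⟩ := hdep
  let c : ℕ → ℂ := fun i => if h : i < m + 1 then c' ⟨i, h⟩ else 0
  have hcc : ∀ i : Fin (m + 1), c' i = c i := by intro i; simp only [c, i.2, dif_pos]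
  let d : ℕ → ℂ := fun i => Nat.casesOn i (c m * β m) (fun j => c j * β j)
  have hsum : ∑ i ∈ Finset.range (m + 1), (c i * α i - d i) • y i = 0 := by
    simp only [hcc] at hc'
    rw [Fin.sum_univ_eq_sum_range (fun i => c i • (α i • y i - β i • y (i + 1)))] at hc'
    rw [← hc']
    simp only [sub_smul, smul_sub, Finset.sum_sub_distrib, smul_smul]
    congr 1
    rw [Finset.sum_range_succ', Finset.sum_range_succ, hy]
    rfl
  rw [← Fin.sum_univ_eq_sum_range (fun i => (c i * α i - d i) • y i)] at hsum
  have hco := Fintype.linearIndependent_iff.mp hli (fun i => c i * α i - d i) hsum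
  have hco' : ∀ i, i < m + 1 → c i * α i = d i := fun i hi => sub_eq_zero.mp (hco ⟨i, hi⟩)
  have hstep : ∀ i, i < m → c i = 0 → c (i + 1) = 0 := by
    intro i hi h
    have := hco' (i + 1) (by omega)
    simp only [d, h, zero_mul] at this
    exact (mul_eq_zero.mp this).resolve_right (hα _)
  have hlast : ∀ j i, i + j = m → c i = 0 → c m = 0 := by
    intro j
    induction j with
    | zero => intro i hi h; rw [← hi]; exact h
    | succ j ih => intro i hi h; exact ih (i + 1) (by omega) (hstep i (by omega) h)
  have hall : c m = 0 → ∀ i, i ≤ m → c i = 0 := by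
    intro h i
    induction i with
    | zero =>
      intro _
      have := hco' 0 (by omega)
      simp only [d, h, zero_mul] at this
      exact (mul_eq_zero.mp this).resolve_right (hα _)
    | succ i ih => intro hi; exact hstep i (by omega) (ih (by omega))
  have hne : ∀ i, i < m + 1 → c i ≠ 0 := by
    intro i hi h
    refine hk ?_
    rw [hcc]
    exact hall (hlast (m - i) i (by omega) h) _ (by omega)
  have hprod : (∏ i ∈ Finset.range (m + 1), c i) * ∏ i ∈ Finset.range (m + 1), α i =
      (∏ i ∈ Finset.range (m + 1), c i) * ∏ i ∈ Finset.range (m + 1), β i := by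
    rw [← Finset.prod_mul_distrib, ← Finset.prod_mul_distrib,
      Finset.prod_congr rfl (fun i hi => hco' i (Finset.mem_range.mp hi)),
      Finset.prod_range_succ', Finset.prod_range_succ]
    rfl
  exact mul_left_cancel₀ (Finset.prod_ne_zero_iff.mpr fun i hi => hne i (Finset.mem_range.mp hi))
    hprod

end RankSec

section MainSec

variable {H : Type*} [NormedAddCommGroup H] [InnerProductSpace ℂ H]
variable {L : Set (Submodule ℂ H)} {Φ : (H →L[ℂ] H) → (H →L[ℂ] H)}

theorem rankOne_mem {M : Submodule ℂ H} {x f : H} (hx : x ∈ M) (hf : f ∈ (minus L M)ᗮ) :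
    rankOne x f ∈ algL L := by
  intro E hE h hh
  rw [rankOne_apply]
  by_cases hM : M ≤ E
  · exact Submodule.smul_mem _ _ (hM hx)
  · have : f ∈ Eᗮ := by
      refine Submodule.orthogonal_le ?_ hf
      exact (le_sSup (show E ∈ {E | E ∈ L ∧ ¬ M ≤ E} from ⟨hE, hM⟩)).trans
        (Submodule.le_topologicalClosure _)
    rw [Submodule.inner_left_of_mem_orthogonal hh this, zero_smul]
    exact Submodule.zero_mem _

theorem algL_add {A B : H →L[ℂ] H} (hA : A ∈ algL L) (hB : B ∈ algL L) : A + B ∈ algL L :=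
  fun E hE x hx => Submodule.add_mem _ (hA E hE x hx) (hB E hE x hx)

theorem algL_smul (c : ℂ) {A : H →L[ℂ] H} (hA : A ∈ algL L) : c • A ∈ algL L :=
  fun E hE x hx => Submodule.smul_mem _ _ (hA E hE x hx)

theorem algL_zero : (0 : H →L[ℂ] H) ∈ algL L :=
  fun E _ _ _ => Submodule.zero_mem E

theorem algL_sum {ι : Type*} (s : Finset ι) (T : ι → H →L[ℂ] H) (hT : ∀ i ∈ s, T i ∈ algL L) :
    ∑ i ∈ s, T i ∈ algL L :=
  Finset.sum_induction T (· ∈ algL L) (fun _ _ => algL_add) algL_zero hT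

theorem phi_zero (hlin : IsLinearOnAlg L Φ) : Φ 0 = 0 := by
  have := hlin.map_smul 0 0 algL_zero
  simpa using this

theorem phi_sum (hlin : IsLinearOnAlg L Φ) {ι : Type*} (s : Finset ι) (T : ι → H →L[ℂ] H)
    (hT : ∀ i ∈ s, T i ∈ algL L) : Φ (∑ i ∈ s, T i) = ∑ i ∈ s, Φ (T i) := by
  classical
  induction s using Finset.induction_on with
  | empty => simpa using phi_zero hlin
  | insert b s hb ih =>
    rw [Finset.sum_insert hb, Finset.sum_insert hb,
      hlin.map_add _ (hT b (by simp)) _ (algL_sum s T fun i hi => hT i (by simp [hi])),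
      ih fun i hi => hT i (by simp [hi])]

theorem phi_sub (hlin : IsLinearOnAlg L Φ) {A B : H →L[ℂ] H} (hA : A ∈ algL L)
    (hB : B ∈ algL L) : Φ (A - B) = Φ A - Φ B := by
  have : A - B = A + (-1 : ℂ) • B := by simp [sub_eq_add_neg]
  rw [this, hlin.map_add _ hA _ (algL_smul _ hB), hlin.map_smul _ _ hB]
  simp [sub_eq_add_neg]

theorem algL_sub {A B : H →L[ℂ] H} (hA : A ∈ algL L) (hB : B ∈ algL L) : A - B ∈ algL L :=
  fun E hE x hx => Submodule.sub_mem _ (hA E hE x hx) (hB E hE x hx)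

theorem phi_ne_zero (hrank : RankPreserving L Φ) {M : Submodule ℂ H} {x f : H} (hx : x ∈ M)
    (hf : f ∈ (minus L M)ᗮ) (hx0 : x ≠ 0) (hf0 : f ≠ 0) : Φ (rankOne x f) ≠ 0 := by
  intro h
  have hlt : opRank (rankOne x f) < Cardinal.aleph0 := by
    simpa using opRank_sum_lt (n := 1) (fun _ => x) (fun _ => f)
  have h1 := hrank _ (rankOne_mem hx hf) hlt
  have h2 : opRank (rankOne x f) = 0 := by
    rw [← h1, h]
    simp [opRank]
  unfold opRank at h2
  rw [Submodule.rank_eq_zero, LinearMap.range_eq_bot] at h2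
  have h3 : rankOne x f f = 0 := LinearMap.congr_fun h2 f
  rw [rankOne_apply, smul_eq_zero] at h3
  rcases h3 with h3 | h3
  · exact hf0 (inner_self_eq_zero.mp h3)
  · exact hx0 h3

theorem scalar_exists {S R : Submodule ℂ H} {u u' v v' : H →ₗ[ℂ] H} {x₀ f₀ : H}
    (hx₀ : x₀ ∈ S) (hf₀ : f₀ ∈ R) (hu : u x₀ ≠ 0) (hu' : u' x₀ ≠ 0) (hv : v f₀ ≠ 0)
    (h : ∀ x ∈ S, ∀ f ∈ R, rankOne (u x) (v f) = rankOne (u' x) (v' f)) :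
    ∃ c : ℂˣ, (∀ x ∈ S, u x = (c : ℂ) • u' x) ∧
      (∀ f ∈ R, v' f = (starRingEnd ℂ (c : ℂ)) • v f) := by
  have hvv : ⟪v f₀, v f₀⟫_ℂ ≠ 0 := inner_self_ne_zero.mpr hv
  let c : ℂ := ⟪v' f₀, v f₀⟫_ℂ / ⟪v f₀, v f₀⟫_ℂ
  have hc : ∀ x ∈ S, u x = c • u' x := by
    intro x hx
    have := congrArg (fun T : H →L[ℂ] H => T (v f₀)) (h x hx f₀ hf₀)
    simp only [rankOne_apply] at this
    simp only [c]
    rw [div_eq_inv_mul, mul_smul, ← this, smul_smul, inv_mul_cancel₀ hvv, one_smul]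
  have hc0 : c ≠ 0 := by
    intro h0
    have := hc x₀ hx₀
    rw [h0, zero_smul] at this
    exact hu this
  refine ⟨Units.mk0 c hc0, hc, fun f hf => ?_⟩
  have h1 := h x₀ hx₀ f hf
  rw [hc x₀ hx₀, rankOne_smul_left] at h1
  refine ext_inner_right ℂ fun w => ?_
  have h2 := congrArg (fun T : H →L[ℂ] H => T w) h1
  simp only [ContinuousLinearMap.smul_apply, rankOne_apply, smul_smul] at h2
  have h3 := smul_left_injective ℂ hu' h2
  rw [inner_smul_left, ← h3]
  simp

variable [CompleteSpace H]

theorem exists_family (hL : IsCSL L) (hlin : IsLinearOnAlg L Φ) (hrank : RankPreserving L Φ)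
    (hcons : ∀ N' ∈ famF L, Consistent L Φ N') :
    ∃ U V : {M // M ∈ famF L} → H →ₗ[ℂ] H,
      (∀ M, ∀ x ∈ M.1, ∀ f ∈ (minus L M.1)ᗮ, Φ (rankOne x f) = rankOne (U M x) (V M f)) ∧
      (∀ M M', M ≤ M' → ∀ x ∈ M.1, U M x = U M' x) ∧
      (∀ M M', M ≤ M' → ∀ f ∈ (minus L M'.1)ᗮ, V M f = V M' f) := by
  have hex : ∀ M : {M // M ∈ famF L}, ∃ U V : H →ₗ[ℂ] H,
      ∀ x ∈ M.1, ∀ f ∈ (minus L M.1)ᗮ, Φ (rankOne x f) = rankOne (U x) (V f) := by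
    intro M
    obtain ⟨-, -, U, V, h⟩ := hcons M.1 M.2
    obtain ⟨U', hU'⟩ := U.exists_extend
    obtain ⟨V', hV'⟩ := V.exists_extend
    refine ⟨U', V', fun x hx f hf => ?_⟩
    rw [h ⟨x, hx⟩ ⟨f, hf⟩, ← hU', ← hV']
    rfl
  choose U V hUV using hex
  have hxe : ∀ M : {M // M ∈ famF L}, ∃ x ∈ M.1, x ≠ 0 := fun M =>
    (Submodule.ne_bot_iff _).mp M.2.2.1
  have hfe : ∀ M : {M // M ∈ famF L}, ∃ f ∈ (minus L M.1)ᗮ, f ≠ 0 := by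
    intro M
    refine (Submodule.ne_bot_iff _).mp fun h => M.2.2.2 ?_
    have : CompleteSpace (minus L M.1) := (hL.isClosed _ (minus_mem hL M.1)).completeSpace_coe
    exact Submodule.orthogonal_eq_bot_iff.mp h
  choose xv hxv hxv0 using hxe
  choose fv hfv hfv0 using hfe
  have hU0 : ∀ M : {M // M ∈ famF L}, ∀ x ∈ M.1, x ≠ 0 → U M x ≠ 0 := by
    intro M x hx h0 h
    refine phi_ne_zero hrank hx (hfv M) h0 (hfv0 M) ?_
    rw [hUV M x hx _ (hfv M), h]
    ext; simp
  have hV0 : ∀ M : {M // M ∈ famF L}, ∀ f ∈ (minus L M.1)ᗮ, f ≠ 0 → V M f ≠ 0 := by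
    intro M f hf h0 h
    refine phi_ne_zero hrank (hxv M) hf (hxv0 M) h0 ?_
    rw [hUV M _ (hxv M) _ hf, h]
    ext; simp
  have hsc : ∀ M M' : {M // M ∈ famF L}, ∃ c : ℂˣ, M ≤ M' →
      (∀ x ∈ M.1, U M x = (c : ℂ) • U M' x) ∧
      (∀ f ∈ (minus L M'.1)ᗮ, V M' f = (starRingEnd ℂ (c : ℂ)) • V M f) := by
    intro M M'
    by_cases hle : M ≤ M'
    · have hle' : M.1 ≤ M'.1 := hle
      have hanti := minus_orth_anti (L := L) hle'
      obtain ⟨c, hc⟩ := scalar_exists (S := M.1) (R := (minus L M'.1)ᗮ) (u := U M) (u' := U M')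
        (v := V M) (v' := V M') (hxv M) (hfv M') (hU0 M _ (hxv M) (hxv0 M))
        (hU0 M' _ (hle' (hxv M)) (hxv0 M)) (hV0 M _ (hanti (hfv M')) (hfv0 M'))
        (fun x hx f hf => by rw [← hUV M x hx f (hanti hf), ← hUV M' x (hle' hx) f hf])
      exact ⟨c, fun _ => hc⟩
    · exact ⟨1, fun h => absurd h hle⟩
  choose a ha using hsc
  have hmul : ∀ X Y Z, X ≤ Y → Y ≤ Z → a X Z = a X Y * a Y Z := by
    intro X Y Z hXY hYZ
    have h1 := (ha X Z (hXY.trans hYZ)).1 _ (hxv X)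
    rw [(ha X Y hXY).1 _ (hxv X), (ha Y Z hYZ).1 _ (hXY (hxv X)), smul_smul] at h1
    have hXZ : X.1 ≤ Z.1 := hXY.trans hYZ
    have := smul_left_injective ℂ (hU0 Z _ (hXZ (hxv X)) (hxv0 X)) h1
    exact Units.ext (by simpa using this.symm)
  have hdet : ∀ (n : ℕ) (A B : ℕ → {M // M ∈ famF L}),
      (∀ i < n, A i ≤ B i ∧ A (i + 1) ≤ B i) → A n = A 0 →
      (∀ i j, i < j → j < n → ¬ ∃ C, C ≤ A i ∧ C ≤ A j) →
      (∀ i j, i < j → j < n → ¬ ∃ D, B i ≤ D ∧ B j ≤ D) →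
      ∏ i ∈ Finset.range n, (a (A i) (B i) * (a (A (i + 1)) (B i))⁻¹) = 1 := by
    intro n A B hAB hcl hl hu
    cases n with
    | zero => simp
    | succ m =>
    have horthA : ∀ i j, i < j → j < m + 1 → ⟪xv (A i), xv (A j)⟫_ℂ = 0 := by
      intro i j hij hj
      refine orth_of_inf hL (A i).2.1 (A j).2.1 ?_ (hxv _) (hxv _)
      by_contra hne
      exact hl i j hij hj ⟨⟨_, famF_of_le hL (inf_mem hL (A i).2.1 (A j).2.1) hne
        inf_le_left (A i).2⟩, inf_le_left (a := (A i).1), inf_le_right (a := (A i).1)⟩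
    have horthB : ∀ i j, i < j → j < m + 1 → ⟪fv (B i), fv (B j)⟫_ℂ = 0 := by
      intro i j hij hj
      refine orth_of_orth_inf hL (minus_mem hL (B i).1) (minus_mem hL (B j).1) ?_ (hfv _) (hfv _)
      intro z hz hz'
      by_contra hne
      obtain ⟨D, hD, h1, h2, -⟩ := famF_upper hL (B i).2 (B j).2 hne hz hz'
      exact hu i j hij hj ⟨⟨D, hD⟩, h1, h2⟩
    have horthA' : ∀ i j : Fin (m + 1), i ≠ j → ⟪xv (A i), xv (A j)⟫_ℂ = 0 := by
      intro i j hij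
      rcases lt_or_gt_of_ne (fun h => hij (Fin.ext h) : (i : ℕ) ≠ j) with h | h
      · exact horthA i j h j.2
      · exact inner_eq_zero_symm.mp (horthA j i h i.2)
    have horthB' : ∀ i j : Fin (m + 1), i ≠ j → ⟪fv (B i), fv (B j)⟫_ℂ = 0 := by
      intro i j hij
      rcases lt_or_gt_of_ne (fun h => hij (Fin.ext h) : (i : ℕ) ≠ j) with h | h
      · exact horthB i j h j.2
      · exact inner_eq_zero_symm.mp (horthB j i h i.2)
    have hlix : LinearIndependent ℂ (fun i : Fin (m + 1) => xv (A i)) :=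
      linearIndependent_of_ne_zero_of_inner_eq_zero (fun i => hxv0 _)
        (fun i j hij => horthA' i j hij)
    have hsf : Function.Surjective (evalG (fun i : Fin (m + 1) => fv (B i))) :=
      evalG_surj _ (fun i => hfv0 _) horthB'
    let y : ℕ → H := fun i => U (A i) (xv (A i))
    let g : ℕ → H := fun i => V (B i) (fv (B i))
    let al : ℕ → ℂ := fun i => ((a (A i) (B i))⁻¹ : ℂˣ)
    let be : ℕ → ℂ := fun i => ((a (A (i + 1)) (B i))⁻¹ : ℂˣ)
    have hy1 : ∀ i : Fin (m + 1), U (B i) (xv (A i)) = al i • y i := by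
      intro i
      simp only [al, y]
      rw [(ha _ _ (hAB i i.2).1).1 _ (hxv _), smul_smul, ← Units.val_mul]
      simp
    have hy2 : ∀ i : Fin (m + 1), U (B i) (xv (A (i + 1))) = be i • y (i + 1) := by
      intro i
      simp only [be, y]
      rw [(ha _ _ (hAB i i.2).2).1 _ (hxv _), smul_smul, ← Units.val_mul]
      simp
    have hm1 : ∀ i : Fin (m + 1), rankOne (xv (A i)) (fv (B i)) ∈ algL L := fun i =>
      rankOne_mem ((hAB i i.2).1 (hxv _)) (hfv _)
    have hm2 : ∀ i : Fin (m + 1), rankOne (xv (A (i + 1))) (fv (B i)) ∈ algL L := fun i =>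
      rankOne_mem ((hAB i i.2).2 (hxv _)) (hfv _)
    have hp1 : ∀ i : Fin (m + 1), Φ (rankOne (xv (A i)) (fv (B i))) = rankOne (al i • y i) (g i) := by
      intro i
      rw [hUV (B i) _ ((hAB i i.2).1 (hxv _)) _ (hfv _), hy1]
    have hp2 : ∀ i : Fin (m + 1), Φ (rankOne (xv (A (i + 1))) (fv (B i))) =
        rankOne (be i • y (i + 1)) (g i) := by
      intro i
      rw [hUV (B i) _ ((hAB i i.2).2 (hxv _)) _ (hfv _), hy2]
    -- first test operator
    have hT1 := hrank _ (algL_sum Finset.univ _ fun i _ => hm1 i) (opRank_sum_lt _ _)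
    rw [(opRank_sum_iff _ _).mpr ⟨hlix, hsf⟩, phi_sum hlin _ _ (fun i _ => hm1 i)] at hT1
    simp only [hp1] at hT1
    obtain ⟨hliy', hsg⟩ := (opRank_sum_iff (fun i : Fin (m + 1) => al i • y i)
      (fun i : Fin (m + 1) => g i)).mp hT1
    have hal : ∀ i, al i ≠ 0 := fun i => Units.ne_zero _
    have hliy : LinearIndependent ℂ (fun i : Fin (m + 1) => y i) := by
      have := hliy'.units_smul (fun i : Fin (m + 1) => (a (A i) (B i)))
      convert this using 1
      funext i
      simp only [al, Pi.smul_apply', Units.smul_def, smul_smul, ← Units.val_mul]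
      simp
    -- second test operator
    have hdep : ¬ LinearIndependent ℂ (fun i : Fin (m + 1) => al i • y i - be i • y (i + 1)) := by
      intro hli
      have hT2 := hrank (∑ i : Fin (m + 1), rankOne (xv (A i) - xv (A (i + 1))) (fv (B i)))
        (algL_sum Finset.univ _ fun i _ => by
          rw [rankOne_sub_left]; exact algL_sub (hm1 i) (hm2 i)) (opRank_sum_lt _ _)
      rw [phi_sum hlin _ _ (fun i _ => by
        rw [rankOne_sub_left]; exact algL_sub (hm1 i) (hm2 i))] at hT2
      simp only [rankOne_sub_left, phi_sub hlin (hm1 _) (hm2 _), hp1, hp2] at hT2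
      simp only [← rankOne_sub_left] at hT2
      rw [(opRank_sum_iff (fun i : Fin (m + 1) => al i • y i - be i • y (i + 1))
        (fun i : Fin (m + 1) => g i)).mpr ⟨hli, hsg⟩] at hT2
      have h1 := ((opRank_sum_iff (fun i : Fin (m + 1) => xv (A i) - xv (A (i + 1)))
        (fun i : Fin (m + 1) => fv (B i))).mp hT2.symm).1
      have h2 := Fintype.linearIndependent_iff.mp h1 (fun _ => 1) (by
        simp only [one_smul]
        rw [Fin.sum_univ_eq_sum_range (fun i => xv (A i) - xv (A (i + 1))),
          Finset.sum_range_sub', hcl, sub_self]) 0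
      exact one_ne_zero h2
    have hprod := cyc_prod m y al be hal (by simp only [y, hcl]) hliy hdep
    rw [Finset.prod_mul_distrib]
    have h1 : ∏ i ∈ Finset.range (m + 1), (a (A i) (B i))⁻¹ =
        ∏ i ∈ Finset.range (m + 1), (a (A (i + 1)) (B i))⁻¹ := by
      apply Units.ext
      simpa only [Units.coe_prod] using hprod
    rw [← h1, Finset.prod_inv_distrib, mul_inv_cancel]
  obtain ⟨c, hc⟩ := Pth.potential hmul (fun n => Pth.closed hmul hdet n)
  refine ⟨fun M => (c M : ℂ) • U M, fun M => (starRingEnd ℂ ((c M)⁻¹ : ℂˣ)) • V M, ?_, ?_, ?_⟩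
  · intro M x hx f hf
    rw [LinearMap.smul_apply, LinearMap.smul_apply, rankOne_smul_left, rankOne_smul_right,
      hUV M x hx f hf, smul_smul, RingHomCompTriple.comp_apply, RingHom.id_apply, ← Units.val_mul]
    simp
  · intro M M' h x hx
    rw [LinearMap.smul_apply, LinearMap.smul_apply, (ha M M' h).1 x hx, smul_smul, ← hc M M' h,
      Units.val_mul]
  · intro M M' h f hf
    rw [LinearMap.smul_apply, LinearMap.smul_apply, (ha M M' h).2 f hf, smul_smul, ← hc M M' h,
      ← map_mul, ← Units.val_mul]
    simp

theorem global_maps (hL : IsCSL L) (hlin : IsLinearOnAlg L Φ) (hrank : RankPreserving L Φ)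
    (hcons : ∀ N' ∈ famF L, Consistent L Φ N') :
    ∃ U V : H →ₗ[ℂ] H, ∀ M ∈ famF L, ∀ x ∈ M, ∀ f ∈ (minus L M)ᗮ,
      Φ (rankOne x f) = rankOne (U x) (V f) := by
  obtain ⟨u, v, huv, hu, hv⟩ := exists_family hL hlin hrank hcons
  obtain ⟨U, hU⟩ := glue (fun M : {M // M ∈ famF L} => M.1) u
    (fun M => (projOf M.1 : H →ₗ[ℂ] H)) (fun M x => projOf_mem x)
    (fun M x hx => projOf_self (hL.isClosed _ M.2.1) hx)
    (fun M M' x hx => by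
      have h1 : projOf M.1 x = projOf M'.1 (projOf M.1 x) := by
        rw [← proj_comm hL M.2.1 M'.2.1, projOf_self (hL.isClosed _ M'.2.1) hx]
      change projOf M.1 x ∈ M'.1
      rw [h1]
      exact projOf_mem _)
    (fun M M' x hx hx' => by
      by_cases h0 : x = 0
      · simp [h0]
      have hne : M.1 ⊓ M'.1 ≠ ⊥ := (Submodule.ne_bot_iff _).mpr ⟨x, ⟨hx, hx'⟩, h0⟩
      have hC := famF_of_le hL (inf_mem hL M.2.1 M'.2.1) hne inf_le_left M.2
      rw [← hu ⟨_, hC⟩ M (inf_le_left (a := M.1)) x ⟨hx, hx'⟩,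
        ← hu ⟨_, hC⟩ M' (inf_le_right (a := M.1)) x ⟨hx, hx'⟩])
  obtain ⟨V, hV⟩ := glue (fun M : {M // M ∈ famF L} => (minus L M.1)ᗮ) v
    (fun M => LinearMap.id - (projOf (minus L M.1) : H →ₗ[ℂ] H))
    (fun M x => sub_projOf_mem (hL.isClosed _ (minus_mem hL M.1)) x)
    (fun M x hx => by
      have := projOf_eq_zero (hL.isClosed _ (minus_mem hL M.1)) hx
      simp [this])
    (fun M M' x hx => sub_proj_orth hL (minus_mem hL M'.1) (minus_mem hL M.1) hx)
    (fun M M' x hx hx' => by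
      by_cases h0 : x = 0
      · simp [h0]
      obtain ⟨D, hD, h1, h2, h3⟩ := famF_upper hL M.2 M'.2 h0 hx hx'
      rw [hv M ⟨D, hD⟩ h1 x h3, hv M' ⟨D, hD⟩ h2 x h3])
  refine ⟨U, V, fun M hM x hx f hf => ?_⟩
  rw [huv ⟨M, hM⟩ x hx f hf, hU ⟨M, hM⟩ x hx, hV ⟨M, hM⟩ f hf]

end MainSec

theorem stmt_11 {H : Type*} [NormedAddCommGroup H] [InnerProductSpace ℂ H]
    [CompleteSpace H] [TopologicalSpace.SeparableSpace H]
    (L : Set (Submodule ℂ H)) (hL : IsCSL L) (hcd : IsCompletelyDistributive L)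
    (Φ : (H →L[ℂ] H) → (H →L[ℂ] H)) (hlin : IsLinearOnAlg L Φ)
    (hrank : RankPreserving L Φ)
    (hcons : ∀ N' ∈ famF L, Consistent L Φ N')
    (N : Submodule ℂ H) (hN : N ∈ famF L) :
    ∃ (U : (sSup (GSet L N) : Submodule ℂ H) →ₗ[ℂ] H)
      (V : (sSup ((fun M => ((minus L M)ᗮ : Submodule ℂ H)) '' GSet L N) :
              Submodule ℂ H) →ₗ[ℂ] H),
      (sSup (GSet L N)).topologicalClosure = closedJoin (GSet L N) ∧
      (sSup ((fun M => ((minus L M)ᗮ : Submodule ℂ H)) '' GSet L N)).topologicalClosure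
        = closedJoin ((fun M => ((minus L M)ᗮ : Submodule ℂ H)) '' GSet L N) ∧
      ∀ (x : (sSup (GSet L N) : Submodule ℂ H))
        (f : (sSup ((fun M => ((minus L M)ᗮ : Submodule ℂ H)) '' GSet L N) :
                Submodule ℂ H))
        (M : Submodule ℂ H), M ∈ GSet L N → (x : H) ∈ M → (f : H) ∈ (minus L M)ᗮ →
          Φ (rankOne (x : H) (f : H)) = rankOne (U x) (V f) := by
  obtain ⟨U, V, h⟩ := global_maps hL hlin hrank hcons
  refine ⟨U.domRestrict _, V.domRestrict _, rfl, rfl, ?_⟩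
  intro x f M hM hx hf
  exact h M hM.1 x hx f hf
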